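/- Let C be a nonempty closed convex subset of a real Hilbert space H and T a metrically nonspreading mapping of C into itself (with the metric induced by the norm) whose fixed point set is nonempty. Then for every x ∈ C the sequence of iterates {Tⁿx} converges weakly to a fixed point of T, i.e., there exists u ∈ C with Tu = u such that ⟪Tⁿx, y⟫ → ⟪u, y⟫ as n → ∞ for every y ∈ H. -/

import Mathlib

open Filter
open scoped RealInnerProductSpace

open Bornology Function Set Topology

/-!
Let `x` have a bounded orbit and put `F k = limsup_n d(Tⁿx, Tⁿ⁺ᵏx)²`. The nonspreading inequality
for two points of the orbit says that `F` is convex; being bounded it is antitone, so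
`F 1 ≤ F 0 = 0` and the orbit is asymptotically regular. The nonspreading inequality for a point of
the orbit and a weak cluster point `u` then gives `Tu = u`. Since the distance from the orbit to
each fixed point decreases, Opial's argument shows that the weak cluster point is unique, and
bounded sets being weakly relatively compact, the orbit converges to it.
-/

theorem antitone_of_two_mul_le_add_of_bddAbove {R : Type*} [Field R] [LinearOrder R]
    [IsStrictOrderedRing R] [Archimedean R] {F : ℕ → R}
    (hconv : ∀ k, 2 * F (k + 1) ≤ F k + F (k + 2)) (hbdd : BddAbove (range F)) : Antitone F := by
  refine antitone_nat_of_succ_le fun k ↦ le_of_not_gt fun hlt ↦ ?_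
  obtain ⟨B, hB⟩ := hbdd
  have increment_mono : Monotone fun j ↦ F (j + 1) - F j :=
    monotone_nat_of_le_succ fun j ↦ by linarith [hconv j]
  have linear_growth (m : ℕ) : F k + m * (F (k + 1) - F k) ≤ F (k + m) := by
    induction m with
    | zero => simp
    | succ m ih =>
      have step : F (k + 1) - F k ≤ F (k + m + 1) - F (k + m) :=
        increment_mono (Nat.le_add_right k m)
      rw [← add_assoc]
      push_cast
      linarith
  obtain ⟨m, hm⟩ := exists_nat_gt ((B - F k) / (F (k + 1) - F k))
  rw [div_lt_iff₀ (sub_pos.2 hlt)] at hm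
  linarith [linear_growth m, hB (mem_range_self (k + m))]

section MetricSpace

variable {X : Type*} [PseudoMetricSpace X]

/-- The asymptotic squared distance `limsup_n d(xₙ, xₙ₊ₖ)²` between a sequence and its shift by
`k`. It is meaningful for bounded sequences; otherwise the real `limsup` may be a junk value. -/
noncomputable def limsupDistSq (x : ℕ → X) (k : ℕ) : ℝ :=
  limsup (fun n ↦ dist (x n) (x (n + k)) ^ 2) atTop

theorem isBoundedUnder_ge_dist_sq {ι : Type*} (l : Filter ι) (y z : ι → X) :
    IsBoundedUnder (· ≥ ·) l fun i ↦ dist (y i) (z i) ^ 2 :=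
  isBoundedUnder_of ⟨0, fun _ ↦ sq_nonneg _⟩

theorem exists_dist_sq_le_of_isBounded {s : Set X} (hs : IsBounded s) :
    ∃ B, ∀ y ∈ s, ∀ z ∈ s, dist y z ^ 2 ≤ B := by
  obtain ⟨B, hB⟩ := Metric.isBounded_iff.1 hs
  exact ⟨B ^ 2, fun y hy z hz ↦ pow_le_pow_left₀ dist_nonneg (hB hy hz) 2⟩

theorem isBoundedUnder_le_dist_sq {ι : Type*} {l : Filter ι} {s : Set X} (hs : IsBounded s)
    {y z : ι → X} (hy : ∀ i, y i ∈ s) (hz : ∀ i, z i ∈ s) :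
    IsBoundedUnder (· ≤ ·) l fun i ↦ dist (y i) (z i) ^ 2 :=
  let ⟨B, hB⟩ := exists_dist_sq_le_of_isBounded hs
  isBoundedUnder_of ⟨B, fun i ↦ hB _ (hy i) _ (hz i)⟩

theorem limsupDistSq_zero (x : ℕ → X) : limsupDistSq x 0 = 0 := by
  simp [limsupDistSq]

theorem bddAbove_range_limsupDistSq {x : ℕ → X} (hx : IsBounded (range x)) :
    BddAbove (range (limsupDistSq x)) := by
  obtain ⟨B, hB⟩ := exists_dist_sq_le_of_isBounded hx
  refine ⟨B, forall_mem_range.2 fun k ↦ ?_⟩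
  exact limsup_le_of_le (isBoundedUnder_ge_dist_sq _ _ _).isCoboundedUnder_le
    (.of_forall fun n ↦ hB _ (mem_range_self _) _ (mem_range_self _))

theorem two_mul_limsupDistSq_le {x : ℕ → X} (hx : IsBounded (range x))
    (h : ∀ m n, 2 * dist (x (m + 1)) (x (n + 1)) ^ 2 ≤
      dist (x (m + 1)) (x n) ^ 2 + dist (x (n + 1)) (x m) ^ 2) (k : ℕ) :
    2 * limsupDistSq x (k + 1) ≤ limsupDistSq x k + limsupDistSq x (k + 2) := by
  have above (p q : ℕ → ℕ) :
      IsBoundedUnder (· ≤ ·) atTop fun n ↦ dist (x (p n)) (x (q n)) ^ 2 :=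
    isBoundedUnder_le_dist_sq hx (fun _ ↦ mem_range_self _) (fun _ ↦ mem_range_self _)
  have below (p q : ℕ → ℕ) :
      IsBoundedUnder (· ≥ ·) atTop fun n ↦ dist (x (p n)) (x (q n)) ^ 2 :=
    isBoundedUnder_ge_dist_sq _ _ _
  have shift (k : ℕ) :
      limsup (fun n ↦ dist (x (n + 1)) (x (n + 1 + k)) ^ 2) atTop = limsupDistSq x k :=
    limsup_nat_add (fun n ↦ dist (x n) (x (n + k)) ^ 2) 1
  have double_mono : Monotone fun t : ℝ ↦ 2 * t := monotone_id.const_mul zero_le_two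
  calc 2 * limsupDistSq x (k + 1)
      = limsup (fun n ↦ 2 * dist (x (n + 1)) (x (n + 1 + (k + 1))) ^ 2) atTop := by
        rw [← shift]
        exact double_mono.map_limsup_of_continuousAt _ (by fun_prop) (above _ _)
          (below _ _).isCoboundedUnder_le
    _ ≤ limsup (fun n ↦ dist (x (n + 1)) (x (n + 1 + k)) ^ 2 +
          dist (x n) (x (n + (k + 2))) ^ 2) atTop := by
        refine limsup_le_limsup (.of_forall fun n ↦ ?_) ?_ ?_
        · beta_reduce
          rw [dist_comm (x n), show n + (k + 2) = n + 1 + k + 1 by ring]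
          exact h n (n + 1 + k)
        · exact (isBoundedUnder_of ⟨0, fun n ↦ by positivity⟩ :
            IsBoundedUnder (· ≥ ·) atTop _).isCoboundedUnder_le
        · exact isBoundedUnder_le_add (above _ _) (above _ _)
    _ ≤ limsup (fun n ↦ dist (x (n + 1)) (x (n + 1 + k)) ^ 2) atTop + limsupDistSq x (k + 2) :=
        limsup_add_le (below _ _) (above _ _) (below _ _).isCoboundedUnder_le (above _ _)
    _ = limsupDistSq x k + limsupDistSq x (k + 2) := by rw [shift]

/-- A self-map `T` of a metric space is *metrically nonspreading* if
`2 d(Tx, Ty)² ≤ d(Tx, y)² + d(Ty, x)²` for all `x` and `y`. -/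
def MetricallyNonspreading (T : X → X) : Prop :=
  ∀ x y, 2 * dist (T x) (T y) ^ 2 ≤ dist (T x) y ^ 2 + dist (T y) x ^ 2

namespace MetricallyNonspreading

variable {T : X → X}

theorem dist_map_le_of_isFixedPt (hT : MetricallyNonspreading T) {p : X} (hp : IsFixedPt T p)
    (x : X) : dist (T x) p ≤ dist x p := by
  have h := hT x p
  rw [hp, dist_comm p x] at h
  exact le_of_sq_le_sq (by linarith) dist_nonneg

theorem antitone_dist_iterate (hT : MetricallyNonspreading T) {p : X} (hp : IsFixedPt T p)
    (x : X) : Antitone fun n ↦ dist (T^[n] x) p :=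
  antitone_nat_of_succ_le fun n ↦ by
    simpa only [iterate_succ_apply'] using hT.dist_map_le_of_isFixedPt hp (T^[n] x)

theorem isBounded_range_iterate (hT : MetricallyNonspreading T) {p : X} (hp : IsFixedPt T p)
    (x : X) : IsBounded (range fun n ↦ T^[n] x) :=
  Metric.isBounded_closedBall.subset
    (range_subset_iff.2 fun n ↦ hT.antitone_dist_iterate hp x n.zero_le)

theorem exists_tendsto_dist_iterate (hT : MetricallyNonspreading T) {p : X} (hp : IsFixedPt T p)
    (x : X) : ∃ r, Tendsto (fun n ↦ dist (T^[n] x) p) atTop (𝓝 r) :=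
  ⟨_, tendsto_atTop_ciInf (hT.antitone_dist_iterate hp x)
    ⟨0, forall_mem_range.2 fun _ ↦ dist_nonneg⟩⟩

theorem antitone_limsupDistSq_iterate (hT : MetricallyNonspreading T) {x : X}
    (hx : IsBounded (range fun n ↦ T^[n] x)) : Antitone (limsupDistSq fun n ↦ T^[n] x) := by
  refine antitone_of_two_mul_le_add_of_bddAbove (two_mul_limsupDistSq_le hx fun m n ↦ ?_)
    (bddAbove_range_limsupDistSq hx)
  simpa only [iterate_succ_apply'] using hT (T^[m] x) (T^[n] x)

theorem tendsto_dist_iterate_map (hT : MetricallyNonspreading T) {x : X}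
    (hx : IsBounded (range fun n ↦ T^[n] x)) :
    Tendsto (fun n ↦ dist (T^[n] x) (T (T^[n] x))) atTop (𝓝 0) := by
  have limsup_nonpos : limsupDistSq (fun n ↦ T^[n] x) 1 ≤ 0 :=
    (hT.antitone_limsupDistSq_iterate hx zero_le_one).trans_eq (limsupDistSq_zero _)
  have above := isBoundedUnder_le_dist_sq (l := atTop) hx (mem_range_self (f := fun n ↦ T^[n] x))
    (fun n ↦ mem_range_self (n + 1))
  have below := isBoundedUnder_ge_dist_sq atTop (fun n ↦ T^[n] x) (fun n ↦ T^[n + 1] x)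
  have sq_tendsto : Tendsto (fun n ↦ dist (T^[n] x) (T^[n + 1] x) ^ 2) atTop (𝓝 0) :=
    tendsto_of_le_liminf_of_limsup_le
      (le_liminf_of_le above.isCoboundedUnder_ge (.of_forall fun n ↦ sq_nonneg _))
      limsup_nonpos above below
  simpa [iterate_succ_apply', Real.sqrt_sq dist_nonneg] using sq_tendsto.sqrt

end MetricallyNonspreading

end MetricSpace

section WeakTopology

theorem isClosed_toWeakSpace_image {𝕜 E : Type*} [RCLike 𝕜] [AddCommGroup E] [Module 𝕜 E]
    [Module ℝ E] [IsScalarTower ℝ 𝕜 E] [TopologicalSpace E] [IsTopologicalAddGroup E]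
    [ContinuousSMul 𝕜 E] [LocallyConvexSpace ℝ E] {C : Set E} (hC : IsClosed C)
    (hconv : Convex ℝ C) : IsClosed (toWeakSpace 𝕜 E '' C) := by
  rw [← hC.closure_eq, hconv.toWeakSpace_closure 𝕜]
  exact isClosed_closure

section RCLike

variable {𝕜 H : Type*} [RCLike 𝕜] [NormedAddCommGroup H] [InnerProductSpace 𝕜 H]

theorem inclusionInDoubleDual_surjective [CompleteSpace H] :
    Surjective (NormedSpace.inclusionInDoubleDual 𝕜 H) := by
  intro Φ
  let ψ : StrongDual 𝕜 H := (starL 𝕜 : 𝕜 ≃L⋆[𝕜] 𝕜).toContinuousLinearMap.comp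
    (Φ.comp (InnerProductSpace.toDual 𝕜 H).toContinuousLinearEquiv.toContinuousLinearMap)
  refine ⟨(InnerProductSpace.toDual 𝕜 H).symm ψ, ?_⟩
  ext f
  obtain ⟨z, rfl⟩ := (InnerProductSpace.toDual 𝕜 H).surjective f
  rw [NormedSpace.dual_def, InnerProductSpace.toDual_apply_apply, ← inner_conj_symm,
    InnerProductSpace.toDual_symm_apply]
  simp [ψ]

theorem isCompact_closure_toWeakSpace_image [CompleteSpace H] {s : Set H} (hs : IsBounded s) :
    IsCompact (closure (toWeakSpace 𝕜 H '' s)) := by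
  refine NormedSpace.isCompact_closure_of_isBounded 𝕜 H _ ?_ ?_
  · rwa [preimage_image_eq _ (toWeakSpace 𝕜 H).injective]
  · exact (inclusionInDoubleDual_surjective (𝕜 := 𝕜) (H := H)).range_eq ▸ subset_univ _

theorem tendsto_inner_of_tendsto_toWeakSpace {ι : Type*} {l : Filter ι} {x : ι → H} {u : H}
    (hx : Tendsto (fun i ↦ toWeakSpace 𝕜 H (x i)) l (𝓝 (toWeakSpace 𝕜 H u))) (y : H) :
    Tendsto (fun i ↦ inner 𝕜 y (x i)) l (𝓝 (inner 𝕜 y u)) :=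
  ((WeakBilin.eval_continuous (topDualPairing 𝕜 H).flip (innerSL 𝕜 y)).tendsto _).comp hx

end RCLike

variable {ι H : Type*} {l : Filter ι} [NormedAddCommGroup H] [InnerProductSpace ℝ H]

theorem eq_of_mapClusterPt_toWeakSpace_of_tendsto_dist {x : ι → H} {u v : H} {r s : ℝ}
    (hu : MapClusterPt (toWeakSpace ℝ H u) l fun i ↦ toWeakSpace ℝ H (x i))
    (hv : MapClusterPt (toWeakSpace ℝ H v) l fun i ↦ toWeakSpace ℝ H (x i))
    (hru : Tendsto (fun i ↦ dist (x i) u) l (𝓝 r))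
    (hsv : Tendsto (fun i ↦ dist (x i) v) l (𝓝 s)) : u = v := by
  obtain ⟨U, hUl, hU⟩ := mapClusterPt_iff_ultrafilter.1 hu
  obtain ⟨V, hVl, hV⟩ := mapClusterPt_iff_ultrafilter.1 hv
  have inner_tendsto : Tendsto (fun i ↦ ⟪u - v, x i⟫) l
      (𝓝 ((‖u‖ ^ 2 - ‖v‖ ^ 2 - (r ^ 2 - s ^ 2)) / 2)) := by
    refine ((((hru.pow 2).sub (hsv.pow 2)).const_sub _).div_const 2).congr fun i ↦ ?_
    rw [dist_eq_norm, dist_eq_norm, norm_sub_sq_real, norm_sub_sq_real, inner_sub_left,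
      real_inner_comm u, real_inner_comm v]
    ring
  have inner_u := tendsto_nhds_unique (tendsto_inner_of_tendsto_toWeakSpace hU (u - v))
    (inner_tendsto.mono_left hUl)
  have inner_v := tendsto_nhds_unique (tendsto_inner_of_tendsto_toWeakSpace hV (u - v))
    (inner_tendsto.mono_left hVl)
  rw [← sub_eq_zero, ← inner_self_eq_zero (𝕜 := ℝ), inner_sub_right, inner_u, inner_v, sub_self]

/-- **Opial's lemma**, with `F` in the role of the fixed point set. -/
theorem exists_tendsto_toWeakSpace_of_tendsto_dist [CompleteSpace H] [NeBot l] {x : ι → H}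
    {F : Set H} (hx : IsBounded (range x))
    (hF : ∀ u, MapClusterPt (toWeakSpace ℝ H u) l (fun i ↦ toWeakSpace ℝ H (x i)) → u ∈ F)
    (hdist : ∀ u ∈ F, ∃ r, Tendsto (fun i ↦ dist (x i) u) l (𝓝 r)) :
    ∃ u ∈ F, Tendsto (fun i ↦ toWeakSpace ℝ H (x i)) l (𝓝 (toWeakSpace ℝ H u)) := by
  have compact := isCompact_closure_toWeakSpace_image (𝕜 := ℝ) hx
  have mem_compact : ∀ᶠ i in l, toWeakSpace ℝ H (x i) ∈ closure (toWeakSpace ℝ H '' range x) :=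
    .of_forall fun i ↦ subset_closure (mem_image_of_mem _ (mem_range_self i))
  obtain ⟨w, -, hw⟩ := compact.exists_mapClusterPt (tendsto_principal.2 mem_compact)
  obtain ⟨u, rfl⟩ := (toWeakSpace ℝ H).surjective w
  refine ⟨u, hF u hw, compact.tendsto_nhds_of_unique_mapClusterPt mem_compact fun w' _ hw' ↦ ?_⟩
  obtain ⟨v, rfl⟩ := (toWeakSpace ℝ H).surjective w'
  obtain ⟨r, hr⟩ := hdist u (hF u hw)
  obtain ⟨s, hs⟩ := hdist v (hF v hw')
  rw [eq_of_mapClusterPt_toWeakSpace_of_tendsto_dist hw' hw hs hr]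

namespace MetricallyNonspreading

variable {C : Set H} {T : C → C}

theorem norm_sub_map_sq_add_two_mul_inner_le (hT : MetricallyNonspreading T) (y u : C) :
    ‖(u : H) - T u‖ ^ 2 + 2 * ⟪(u : H) - T u, y - u⟫ ≤
      2 * ⟪(y : H) - T y, y⟫ + 2 * ⟪(y : H) - T y, u - (2 : ℝ) • (T u : H)⟫ := by
  -- Writing `Ty = y - (y - Ty)` turns the inequality for `y` and `u` into a bound on
  -- `‖y - Tu‖² - ‖y - u‖²` by inner products with the defect `y - Ty`.
  have h := hT y u
  simp only [Subtype.dist_eq, dist_eq_norm] at h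
  have defect_nonneg := sq_nonneg ‖(y : H) - T y‖
  simp only [← real_inner_self_eq_norm_sq, inner_sub_left, inner_sub_right, inner_smul_right,
    real_inner_comm] at h defect_nonneg ⊢
  linarith

theorem isFixedPt_of_tendsto_toWeakSpace [NeBot l] (hT : MetricallyNonspreading T) {y : ι → C}
    {u : C} (hy : IsBounded (range y)) (hyT : Tendsto (fun i ↦ dist (y i) (T (y i))) l (𝓝 0))
    (hyu : Tendsto (fun i ↦ toWeakSpace ℝ H (y i)) l (𝓝 (toWeakSpace ℝ H u))) :
    IsFixedPt T u := by
  have defect_tendsto : Tendsto (fun i ↦ (y i : H) - T (y i)) l (𝓝 0) := by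
    rw [tendsto_zero_iff_norm_tendsto_zero]
    simpa only [Subtype.dist_eq, dist_eq_norm] using hyT
  have norm_bdd : IsBoundedUnder (· ≤ ·) l (norm ∘ fun i ↦ (y i : H)) := by
    obtain ⟨R, hR⟩ := isBounded_iff_forall_norm_le.1 (isBounded_image_subtype_val.2 hy)
    exact isBoundedUnder_of ⟨R, fun i ↦ hR _ (mem_image_of_mem _ (mem_range_self i))⟩
  have upper : Tendsto (fun i ↦ 2 * ⟪(y i : H) - T (y i), y i⟫ +
      2 * ⟪(y i : H) - T (y i), u - (2 : ℝ) • (T u : H)⟫) l (𝓝 0) := by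
    have orbit_part := defect_tendsto.op_zero_isBoundedUnder_le norm_bdd
      (fun a b ↦ ⟪a, b⟫) norm_inner_le_norm
    have const_part := defect_tendsto.inner
      (tendsto_const_nhds (x := (u : H) - (2 : ℝ) • (T u : H)) (f := l)) (𝕜 := ℝ)
    simpa using (orbit_part.const_mul 2).add (const_part.const_mul 2)
  have lower : Tendsto (fun i ↦ ‖(u : H) - T u‖ ^ 2 + 2 * ⟪(u : H) - T u, y i - u⟫) l
      (𝓝 (‖(u : H) - T u‖ ^ 2)) := by
    have weak := tendsto_inner_of_tendsto_toWeakSpace hyu ((u : H) - T u)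
    simpa [inner_sub_right] using ((weak.sub_const ⟪(u : H) - T u, u⟫).const_mul 2).const_add _
  have defect_sq_nonpos : ‖(u : H) - T u‖ ^ 2 ≤ 0 :=
    le_of_tendsto_of_tendsto' lower upper fun i ↦ hT.norm_sub_map_sq_add_two_mul_inner_le (y i) u
  have defect_eq_zero : ‖(u : H) - T u‖ = 0 := by
    simpa using defect_sq_nonpos.antisymm (sq_nonneg _)
  exact Subtype.ext (sub_eq_zero.1 (norm_eq_zero.1 defect_eq_zero)).symm

theorem mem_image_fixedPoints_of_mapClusterPt (hT : MetricallyNonspreading T)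
    (hC : IsClosed (toWeakSpace ℝ H '' C)) {x : C} (hx : IsBounded (range fun n ↦ T^[n] x)) {u : H}
    (hu : MapClusterPt (toWeakSpace ℝ H u) atTop fun n ↦ toWeakSpace ℝ H (T^[n] x)) :
    u ∈ ((↑) : C → H) '' fixedPoints T := by
  obtain ⟨U, hU, hUu⟩ := mapClusterPt_iff_ultrafilter.1 hu
  have mem_image : toWeakSpace ℝ H u ∈ toWeakSpace ℝ H '' C :=
    hC.mem_of_tendsto hUu (.of_forall fun n ↦ mem_image_of_mem _ (T^[n] x).2)
  have hu_mem : u ∈ C := (toWeakSpace ℝ H).injective.mem_set_image.1 mem_image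
  exact ⟨⟨u, hu_mem⟩, hT.isFixedPt_of_tendsto_toWeakSpace (u := ⟨u, hu_mem⟩)
    (hx.subset (range_subset_iff.2 mem_range_self))
    ((hT.tendsto_dist_iterate_map hx).mono_left hU) hUu, rfl⟩

end MetricallyNonspreading

end WeakTopology

theorem stmt_12_general {H : Type*} [NormedAddCommGroup H] [InnerProductSpace ℝ H]
    [CompleteSpace H] {C : Set H} (hC : IsClosed (toWeakSpace ℝ H '' C)) {T : C → C}
    (hT : MetricallyNonspreading T) {x : C} (hx : IsBounded (range fun n ↦ T^[n] x)) :
    ∃ u : C, T u = u ∧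
      ∀ y : H, Tendsto (fun n : ℕ => ⟪(T^[n] x : H), y⟫) atTop (nhds ⟪(u : H), y⟫) := by
  have coe_bdd : IsBounded (range fun n ↦ (T^[n] x : H)) := by
    simpa only [← range_comp, comp_def] using isBounded_image_subtype_val.2 hx
  obtain ⟨_, ⟨u, hu, rfl⟩, hlim⟩ := exists_tendsto_toWeakSpace_of_tendsto_dist
    coe_bdd (fun v ↦ hT.mem_image_fixedPoints_of_mapClusterPt hC hx)
    (forall_mem_image.2 fun p hp ↦ hT.exists_tendsto_dist_iterate hp x)
  refine ⟨u, hu, fun y ↦ ?_⟩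
  simpa only [real_inner_comm y] using tendsto_inner_of_tendsto_toWeakSpace hlim y

/-- If `T` is a metrically nonspreading self-mapping of a nonempty closed convex subset
of a real Hilbert space with nonempty fixed point set, then for every `x` the orbit
`{Tⁿx}` converges weakly to a fixed point of `T`. -/
theorem stmt_12 {H : Type*} [NormedAddCommGroup H] [InnerProductSpace ℝ H]
    [CompleteSpace H] (C : Set H) (hC : C.Nonempty) (hCc : IsClosed C) (hCv : Convex ℝ C)
    (T : C → C)
    (hT : ∀ x y : C, 2 * dist (T x) (T y) ^ 2 ≤ dist (T x) y ^ 2 + dist (T y) x ^ 2)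
    (hfix : ∃ u : C, T u = u) (x : C) :
    ∃ u : C, T u = u ∧
      ∀ y : H, Tendsto (fun n : ℕ => ⟪(T^[n] x : H), y⟫) atTop (nhds ⟪(u : H), y⟫) := by
  obtain ⟨p, hp⟩ := hfix
  exact stmt_12_general (isClosed_toWeakSpace_image hCc hCv) hT
    (MetricallyNonspreading.isBounded_range_iterate hT hp x)
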